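/- There is a computable algebraic lattice that is not computably isomorphic to any computable complete sublattice of Eq(ℕ). That is: there exists a computable relation r : ℕ → ℕ → Bool which is a partial order on ℕ under which every subset of ℕ has a least upper bound and a greatest lower bound and every element is the supremum of the compact elements below it, such that for every uniformly computable family E : ℕ → ℕ → ℕ → Bool for which each E i is an equivalence relation on ℕ, the relations E i are pairwise distinct, and the set {E i : i ∈ ℕ} is a complete sublattice of Eq(ℕ), there is no computable function φ : ℕ → ℕ satisfying, for all i and j, r i j = true if and only if E (φ i) is contained in E (φ j). -/

import Mathlib

/-- `T` is a tree: a set of finite sequences of natural numbers closed under prefixes. -/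
def IsTree (T : Set (List ℕ)) : Prop :=
  ∀ l ∈ T, ∀ l' : List ℕ, l' <+: l → l' ∈ T

/-- `f : ℕ → ℕ` is an infinite path of `T`: every initial segment
`[f 0, f 1, …, f (k-1)]` belongs to `T`. -/
def IsPath (T : Set (List ℕ)) (f : ℕ → ℕ) : Prop :=
  ∀ k : ℕ, (List.range k).map f ∈ T

/-- An upper bound of `A` with respect to the relation `le`. -/
def RelUpperBound {X : Type*} (le : X → X → Prop) (A : Set X) (j : X) : Prop :=
  ∀ x ∈ A, le x j

/-- A lower bound of `A` with respect to the relation `le`. -/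
def RelLowerBound {X : Type*} (le : X → X → Prop) (A : Set X) (m : X) : Prop :=
  ∀ x ∈ A, le m x

/-- `j` is a least upper bound of `A` with respect to the relation `le`. -/
def RelIsLUB {X : Type*} (le : X → X → Prop) (A : Set X) (j : X) : Prop :=
  RelUpperBound le A j ∧ ∀ k, RelUpperBound le A k → le j k

/-- `m` is a greatest lower bound of `A` with respect to the relation `le`. -/
def RelIsGLB {X : Type*} (le : X → X → Prop) (A : Set X) (m : X) : Prop :=
  RelLowerBound le A m ∧ ∀ k, RelLowerBound le A k → le k m

/-- `c` is a compact element with respect to the relation `le`: whenever `c` is below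
the supremum of a set `A`, it is below the supremum of some finite subset of `A`. -/
def RelIsCompact {X : Type*} (le : X → X → Prop) (c : X) : Prop :=
  ∀ (A : Set X) (j : X), RelIsLUB le A j → le c j →
    ∃ A' ⊆ A, A'.Finite ∧ ∃ j' : X, RelIsLUB le A' j' ∧ le c j'

/-- The binary relation on `ℕ` determined by a Boolean-valued function. -/
def RelOfBool (r : ℕ → ℕ → Bool) (i j : ℕ) : Prop := r i j = true

/-- `r` codes a computable algebraic lattice: `r` is computable, the induced relation is
a partial order on `ℕ` under which every subset has a least upper bound and a greatest
lower bound, and every element is the supremum of the compact elements below it. -/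
def IsComputableAlgebraicLattice (r : ℕ → ℕ → Bool) : Prop :=
  Computable₂ r
  ∧ IsPartialOrder ℕ (RelOfBool r)
  ∧ (∀ A : Set ℕ, (∃ j, RelIsLUB (RelOfBool r) A j) ∧ (∃ m, RelIsGLB (RelOfBool r) A m))
  ∧ (∀ x : ℕ,
      RelIsLUB (RelOfBool r) {c : ℕ | RelIsCompact (RelOfBool r) c ∧ RelOfBool r c x} x)

/-- The set of equivalence relations (setoids) on `ℕ` coded by the family `E`. -/
def SetoidsOf (E : ℕ → ℕ → ℕ → Bool) : Set (Setoid ℕ) :=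
  {s : Setoid ℕ | ∃ i : ℕ, ∀ a b : ℕ, s a b ↔ E i a b = true}

/-- `E` codes a computable complete sublattice of `Eq(ℕ)`: a uniformly computable
family of pairwise distinct equivalence relations on `ℕ` whose associated set of
setoids is closed under arbitrary suprema and infima as computed in `Eq(ℕ)`. -/
def IsComputableCompleteSublatticeOfEq (E : ℕ → ℕ → ℕ → Bool) : Prop :=
  Computable (fun t : ℕ × ℕ × ℕ => E t.1 t.2.1 t.2.2)
  ∧ (∀ i : ℕ, Equivalence (RelOfBool (E i)))
  ∧ (∀ i j : ℕ, i ≠ j → RelOfBool (E i) ≠ RelOfBool (E j))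
  ∧ (∀ S : Set (Setoid ℕ), S ⊆ SetoidsOf E →
      sSup S ∈ SetoidsOf E ∧ sInf S ∈ SetoidsOf E)

/-!
Of a complete sublattice of `Eq(ℕ)` we only use that its members, as sets of pairs, form a
countable uniformly computable family `F` closed under intersections and directed unions. The
lattice is a lexicographic sum of gadgets, the `e`-th of which defeats every such `F` for which
the `e`-th program decides membership in the sets `F i` and in the images of the lattice
elements.

The gadget contains elements `Z j a` and, for every finite list of positions, elements `Y`; the
order between them is governed by a function `f`, where `f s` is the least requirement that
moves at stage `s` of a construction. A requirement `J` alternately opens a phase, at a stage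
`a`, and closes it with a witness `q` that lies in `F J` and in the image of `Y`, but not in the
image of `Z a a`. Here `Y` is below `Z b b` for every earlier opening stage `b` of `J`, and `J`
waits, before it opens a phase, until all its earlier witnesses are seen in the image of some
`Z j b` which is below `Z a a` as long as no requirement `≤ j` moves from stage `b` on.

If `f` tends to infinity, the images of the `Z j a` for which no requirement `≤ j` moves after
`a` are directed, so their union is some `F J`. This is what `J` needs to close an open phase,
and to open a new one when its finitely many old witnesses have been absorbed by one such image;
so `J` moves again, a contradiction. Otherwise some least `J` moves infinitely often, and its
phases give sets `Z₀, Z₁, …` in `F` and points `qᵢ` with `qᵢ ∈ Zₖ ↔ i ≠ k`; intersecting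
subfamilies of the `Zₖ` produces continuum many members of the countable family `F`.
-/

open Set Function Filter

section ComputableEnumeration

variable {α X : Type*} [Denumerable α] {S : α → X}

/-- `n` is the first position, in the enumeration of `α`, at which the value of `S` at the `n`-th
element occurs. -/
def IsFirstOccurrence (S : α → X) (n : ℕ) : Prop :=
  ∀ m, S (Denumerable.ofNat α m) = S (Denumerable.ofNat α n) → n ≤ m

lemma IsFirstOccurrence.eq {m n : ℕ} (hm : IsFirstOccurrence S m) (hn : IsFirstOccurrence S n)
    (h : S (Denumerable.ofNat α m) = S (Denumerable.ofNat α n)) : m = n :=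
  (hm n h.symm).antisymm (hn m h)

theorem exists_computable_isFirstOccurrence
    (hS : ComputablePred fun p : α × α => S p.1 = S p.2) :
    ∃ first : α → ℕ, Computable first ∧
      ∀ a, IsFirstOccurrence S (first a) ∧ S (Denumerable.ofNat α (first a)) = S a := by
  classical
  have hex : ∀ a, ∃ m, S (Denumerable.ofNat α m) = S a := fun a =>
    ⟨Encodable.encode a, by rw [Denumerable.ofNat_encode]⟩
  have hpred : ComputablePred fun p : α × ℕ => S (Denumerable.ofNat α p.2) = S p.1 :=
    (hS.decide.comp
      (((Computable.ofNat α).comp Computable.snd).pair Computable.fst)).computablePred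
  refine ⟨fun a => Nat.find (hex a), Computable.find hpred hex, fun a => ⟨fun m hm => ?_, ?_⟩⟩
  · exact Nat.find_min' (hex a) (hm.trans (Nat.find_spec (hex a)))
  · exact Nat.find_spec (hex a)

lemma computable_nat_count {p : ℕ → Prop} [DecidablePred p] (hp : ComputablePred p) :
    Computable (Nat.count p) :=
  (Computable.nat_rec Computable.id (Computable.const 0)
    ((Computable.cond (hp.decide.comp (Computable.fst.comp Computable.snd))
      (Computable.succ.comp (Computable.snd.comp Computable.snd))
      (Computable.snd.comp Computable.snd)).to₂)).of_eq fun n => by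
    induction n with
    | zero => simp
    | succ n ih =>
      simp only [id_eq] at ih ⊢
      by_cases h : p n <;> simp [Nat.count_succ, h, ih]

theorem exists_computable_injective_enumeration
    (hS : ComputablePred fun p : α × α => S p.1 = S p.2) (hinf : (range S).Infinite) :
    ∃ (h : ℕ → α) (π : α → ℕ), Computable h ∧ Computable π ∧ Injective (S ∘ h) ∧
      ∀ a, S (h (π a)) = S a := by
  classical
  obtain ⟨first, hfirst, hfirst_spec⟩ := exists_computable_isFirstOccurrence hS
  let p := IsFirstOccurrence S
  have hp_infinite : {n | p n}.Infinite := fun hfin =>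
    hinf <| (hfin.image fun n => S (Denumerable.ofNat α n)).subset <| range_subset_iff.2 fun a =>
      ⟨first a, (hfirst_spec a).1, (hfirst_spec a).2⟩
  have hp : ComputablePred p :=
    ((Primrec.eq.decide.to_comp.comp (hfirst.comp (Computable.ofNat α))
      Computable.id).computablePred).of_eq fun n =>
        ⟨fun h => (show first _ = n from h) ▸ (hfirst_spec _).1,
          fun h => (hfirst_spec _).1.eq h (hfirst_spec _).2⟩
  have hcount : Computable (Nat.count p) := computable_nat_count hp
  have hex : ∀ n, ∃ m, p m ∧ Nat.count p m = n := fun n =>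
    ⟨Nat.nth p n, Nat.nth_mem_of_infinite hp_infinite n, Nat.count_nth_of_infinite hp_infinite n⟩
  have hfind : Computable fun n => Nat.find (hex n) := by
    refine Computable.find (Computable.computablePred ?_) hex
    exact (Primrec.and.to_comp.comp (hp.decide.comp Computable.snd)
      (Primrec.eq.decide.to_comp.comp (hcount.comp Computable.snd) Computable.fst)).of_eq
        fun _ => (Bool.decide_and ..).symm
  refine ⟨fun n => Denumerable.ofNat α (Nat.find (hex n)), fun a => Nat.count p (first a),
    (Computable.ofNat α).comp hfind, hcount.comp hfirst, fun m n hmn => ?_, fun a => ?_⟩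
  · rw [← (Nat.find_spec (hex m)).2, ← (Nat.find_spec (hex n)).2,
      (Nat.find_spec (hex m)).1.eq (Nat.find_spec (hex n)).1 hmn]
  · obtain ⟨hmem, hcount_eq⟩ := Nat.find_spec (hex (Nat.count p (first a)))
    simp only [Nat.count_injective hmem (hfirst_spec a).1 hcount_eq, (hfirst_spec a).2]

end ComputableEnumeration

section AlgebraicUnionSystems

variable {P : Type*}

/-- `K` is a compact element of the family `𝓕`, ordered by inclusion, whose suprema are unions. -/
def IsCompactIn (𝓕 : Set (Set P)) (K : Set P) : Prop :=
  ∀ 𝓑 ⊆ 𝓕, K ⊆ ⋃₀ 𝓑 → ∃ 𝓑' ⊆ 𝓑, 𝓑'.Finite ∧ K ⊆ ⋃₀ 𝓑'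

/-- A family of sets closed under arbitrary unions, every member of which is a union of compact
members. Ordered by inclusion it is an algebraic lattice in which suprema are unions, while infima
are in general smaller than intersections. -/
structure IsAlgebraicUnionSystem (𝓕 : Set (Set P)) : Prop where
  sUnion_mem : ∀ 𝓑 ⊆ 𝓕, ⋃₀ 𝓑 ∈ 𝓕
  exists_isCompactIn : ∀ X ∈ 𝓕, ∀ x ∈ X, ∃ K ∈ 𝓕, IsCompactIn 𝓕 K ∧ x ∈ K ∧ K ⊆ X

lemma isCompactIn_of_finite_diff {𝓕 : Set (Set P)} {K : Set P}
    (h : ∀ 𝓑 ⊆ 𝓕, K ⊆ ⋃₀ 𝓑 → ∃ X ∈ 𝓑, (K \ X).Finite) : IsCompactIn 𝓕 K := by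
  intro 𝓑 h𝓑 hK
  obtain ⟨X, hX, hfin⟩ := h 𝓑 h𝓑 hK
  choose! B hB𝓑 hB using fun p (hp : p ∈ K) => mem_sUnion.1 (hK hp)
  refine ⟨insert X (B '' (K \ X)), insert_subset hX (image_subset_iff.2 fun p hp => hB𝓑 p hp.1),
    (hfin.image B).insert X, fun p hp => ?_⟩
  by_cases hpX : p ∈ X
  · exact ⟨X, mem_insert X _, hpX⟩
  · exact ⟨B p, mem_insert_of_mem X (mem_image_of_mem B ⟨hp, hpX⟩), hB p hp⟩

section Order

variable {T : ℕ → Set P} {r : ℕ → ℕ → Bool}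

lemma relIsLUB_iff_eq_sUnion (hr : ∀ i j, RelOfBool r i j ↔ T i ⊆ T j)
    (hT : ∀ 𝓑 ⊆ range T, ⋃₀ 𝓑 ∈ range T) {A : Set ℕ} {j : ℕ} :
    RelIsLUB (RelOfBool r) A j ↔ T j = ⋃₀ (T '' A) := by
  have hub : ∀ k, RelUpperBound (RelOfBool r) A k ↔ ⋃₀ (T '' A) ⊆ T k := fun k => by
    simp only [RelUpperBound, hr, sUnion_subset_iff, forall_mem_image]
  simp only [RelIsLUB, hub, hr]
  refine ⟨fun ⟨hj, hleast⟩ => ?_, fun h => ⟨h.ge, fun k hk => h.le.trans hk⟩⟩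
  obtain ⟨k, hk⟩ := hT (T '' A) (image_subset_range T A)
  exact ((hleast k hk.ge).trans hk.le).antisymm hj

lemma relIsCompact_of_isCompactIn (hr : ∀ i j, RelOfBool r i j ↔ T i ⊆ T j)
    (hT : ∀ 𝓑 ⊆ range T, ⋃₀ 𝓑 ∈ range T) {c : ℕ} (hc : IsCompactIn (range T) (T c)) :
    RelIsCompact (RelOfBool r) c := by
  intro A j hj hcj
  rw [relIsLUB_iff_eq_sUnion hr hT] at hj
  obtain ⟨A', hA', hfin, hcover⟩ := exists_subset_image_finite_and.1
    (hc (T '' A) (image_subset_range T A) (((hr c j).1 hcj).trans hj.le))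
  obtain ⟨k, hk⟩ := hT (T '' A') (image_subset_range T A')
  exact ⟨A', hA', hfin, k, (relIsLUB_iff_eq_sUnion hr hT).2 hk, (hr c k).2 (hcover.trans hk.ge)⟩

theorem isComputableAlgebraicLattice_of_range (hcomp : Computable₂ r) (hinj : Injective T)
    (hr : ∀ i j, RelOfBool r i j ↔ T i ⊆ T j) (hT : IsAlgebraicUnionSystem (range T)) :
    IsComputableAlgebraicLattice r := by
  have hlub : ∀ A, ∃ j, RelIsLUB (RelOfBool r) A j := fun A =>
    (hT.sUnion_mem (T '' A) (image_subset_range T A)).imp fun _ =>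
      (relIsLUB_iff_eq_sUnion hr hT.sUnion_mem).2
  refine ⟨hcomp, ?_, fun A => ⟨hlub A, ?_⟩, fun x => ?_⟩
  · exact { refl i := (hr i i).2 Subset.rfl
            trans i j k hij hjk := (hr i k).2 (((hr i j).1 hij).trans ((hr j k).1 hjk))
            antisymm i j hij hji := hinj (((hr i j).1 hij).antisymm ((hr j i).1 hji)) }
  · obtain ⟨m, hub, hleast⟩ := hlub {k | RelLowerBound (RelOfBool r) A k}
    exact ⟨m, fun x hx => hleast x fun k hk => hk x hx, fun k hk => hub k hk⟩
  · rw [relIsLUB_iff_eq_sUnion hr hT.sUnion_mem]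
    refine Subset.antisymm (fun p hp => ?_) (sUnion_subset ?_)
    · obtain ⟨_, ⟨c, rfl⟩, hc, hpc, hcx⟩ := hT.exists_isCompactIn (T x) (mem_range_self x) p hp
      exact ⟨T c, mem_image_of_mem T
        ⟨relIsCompact_of_isCompactIn hr hT.sUnion_mem hc, (hr c x).2 hcx⟩, hpc⟩
    · rintro _ ⟨c, hc, rfl⟩
      exact (hr c x).1 hc.2

end Order

theorem exists_isComputableAlgebraicLattice {α : Type*} [Denumerable α] {S : α → Set P}
    (hcomp : ComputablePred fun p : α × α => S p.1 ⊆ S p.2) (hinf : (range S).Infinite)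
    (hS : IsAlgebraicUnionSystem (range S)) :
    ∃ (r : ℕ → ℕ → Bool) (π : α → ℕ), IsComputableAlgebraicLattice r ∧ Computable π ∧
      ∀ a b, RelOfBool r (π a) (π b) ↔ S a ⊆ S b := by
  classical
  have hsub : Computable₂ fun a b => decide (S a ⊆ S b) := hcomp.decide
  have heq : ComputablePred fun p : α × α => S p.1 = S p.2 :=
    Computable.computablePred <| (Primrec.and.to_comp.comp hsub
      (hsub.comp Computable.snd Computable.fst)).of_eq fun _ => by
        simp only [← Bool.decide_and, Subset.antisymm_iff]
  obtain ⟨h, π, hh, hπ, hinj, hhπ⟩ := exists_computable_injective_enumeration heq hinf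
  have hrange : range (S ∘ h) = range S :=
    (range_comp_subset_range h S).antisymm
      (range_subset_iff.2 fun a => ⟨π a, hhπ a⟩)
  refine ⟨fun i j => decide (S (h i) ⊆ S (h j)), π, ?_, hπ, fun a b => ?_⟩
  · exact isComputableAlgebraicLattice_of_range
      (hsub.comp (hh.comp Computable.fst) (hh.comp Computable.snd)) hinj
      (fun _ _ => decide_eq_true_iff) (hrange ▸ hS)
  · simp only [RelOfBool, decide_eq_true_iff, hhπ]

end AlgebraicUnionSystems

section LexicographicSum

variable {Q : Type*} {𝓖 : ℕ → Set (Set Q)} {d e n : ℕ} {q : Q} {U V : Set Q} {X : Set (ℕ × Q)}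

/-- The copy of `U` in the `e`-th summand of the lexicographic sum of the powers of `Q`; it contains
all the earlier summands. -/
def lexLift (e : ℕ) (U : Set Q) : Set (ℕ × Q) :=
  {x | x.1 < e ∨ x.1 = e ∧ x.2 ∈ U}

/-- The lexicographic sum of a sequence of families of sets, with the whole space added as a top. -/
def lexSum (𝓖 : ℕ → Set (Set Q)) : Set (Set (ℕ × Q)) :=
  insert univ {X | ∃ e, ∃ U ∈ 𝓖 e, lexLift e U = X}

lemma mk_mem_lexLift_self : (e, q) ∈ lexLift e U ↔ q ∈ U := by
  simp [lexLift]

lemma lexLift_univ : lexLift e (univ : Set Q) = lexLift (e + 1) ∅ := by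
  ext x
  simp [lexLift, le_iff_lt_or_eq]

lemma lexLift_ne_univ (e : ℕ) {U : Set Q} (hU : U ≠ univ) : lexLift e U ≠ univ := by
  obtain ⟨q, hq⟩ := (ne_univ_iff_exists_notMem U).1 hU
  exact (ne_univ_iff_exists_notMem _).2 ⟨(e, q), mk_mem_lexLift_self.not.2 hq⟩

lemma lexLift_subset_lexLift_of_lt (h : d < e) : lexLift d U ⊆ lexLift e V :=
  fun _ hx => Or.inl (hx.elim (fun hlt => hlt.trans h) fun heq => heq.1.trans_lt h)

lemma lexLift_subset_lexLift_self : lexLift e U ⊆ lexLift e V ↔ U ⊆ V :=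
  ⟨fun h _ hq => mk_mem_lexLift_self.1 (h (mk_mem_lexLift_self.2 hq)),
    fun h _ hx => hx.imp_right fun heq => ⟨heq.1, h heq.2⟩⟩

lemma lexLift_subset_lexLift (hV : V ≠ univ) :
    lexLift d U ⊆ lexLift e V ↔ d < e ∨ d = e ∧ U ⊆ V := by
  rcases lt_trichotomy d e with h | rfl | h
  · simp [h, lexLift_subset_lexLift_of_lt h]
  · simp [lexLift_subset_lexLift_self]
  · obtain ⟨q, hq⟩ := (ne_univ_iff_exists_notMem V).1 hV
    have hnot : ¬ lexLift d U ⊆ lexLift e V := fun hsub =>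
      hq (mk_mem_lexLift_self.1 (hsub (Or.inl h)))
    simp [hnot, h.not_gt, h.ne']

lemma lexLift_univ_subset_or_eq_lexLift (hX : X ∈ lexSum 𝓖) (hx : (n, q) ∈ X) :
    lexLift n univ ⊆ X ∨ ∃ U ∈ 𝓖 n, q ∈ U ∧ lexLift n U = X := by
  rcases hX with rfl | ⟨e, U, hU, rfl⟩
  · exact Or.inl (subset_univ _)
  · rcases hx with hlt | ⟨rfl, hq⟩
    · exact Or.inl (lexLift_subset_lexLift_of_lt hlt)
    · exact Or.inr ⟨U, hU, hq, rfl⟩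

lemma sUnion_mem_lexSum (h𝓖 : ∀ e, ∀ 𝓑 ⊆ 𝓖 e, ⋃₀ 𝓑 ∈ 𝓖 e) {𝓑 : Set (Set (ℕ × Q))}
    (h𝓑 : 𝓑 ⊆ lexSum 𝓖) : ⋃₀ 𝓑 ∈ lexSum 𝓖 := by
  by_cases hcofinal : ∀ n, ∃ X ∈ 𝓑, lexLift n univ ⊆ X
  · refine Or.inl (eq_univ_of_forall fun x => ?_)
    obtain ⟨X, hX, hsub⟩ := hcofinal x.1
    exact ⟨X, hX, hsub (mk_mem_lexLift_self.2 (mem_univ x.2))⟩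
  · classical
    push Not at hcofinal
    have hleast := Nat.find_spec hcofinal
    have hbelow : ∀ n < Nat.find hcofinal, ∃ X ∈ 𝓑, lexLift n univ ⊆ X := fun n hn => by
      simpa using Nat.find_min hcofinal hn
    set e := Nat.find hcofinal
    refine Or.inr ⟨e, ⋃₀ {U ∈ 𝓖 e | lexLift e U ∈ 𝓑}, h𝓖 e _ (sep_subset _ _), ?_⟩
    ext ⟨n, q⟩
    rcases lt_trichotomy n e with hlt | rfl | hgt
    · obtain ⟨X, hX, hsub⟩ := hbelow n hlt
      exact iff_of_true (Or.inl hlt) ⟨X, hX, hsub (mk_mem_lexLift_self.2 (mem_univ q))⟩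
    · rw [mk_mem_lexLift_self]
      constructor
      · rintro ⟨U, ⟨-, hU⟩, hq⟩
        exact ⟨_, hU, mk_mem_lexLift_self.2 hq⟩
      · rintro ⟨X, hX, hx⟩
        obtain ⟨U, hU, hq, rfl⟩ :=
          (lexLift_univ_subset_or_eq_lexLift (h𝓑 hX) hx).resolve_left (hleast X hX)
        exact ⟨U, ⟨hU, hX⟩, hq⟩
    · refine iff_of_false (fun h => h.elim hgt.not_gt fun h => hgt.ne' h.1) ?_
      rintro ⟨X, hX, hx⟩
      rcases h𝓑 hX with rfl | ⟨d, U, -, rfl⟩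
      · exact hleast _ hX (subset_univ _)
      · have hed : e < d := hgt.trans_le (hx.elim le_of_lt fun h => h.1.le)
        exact hleast _ hX (lexLift_subset_lexLift_of_lt hed)

lemma isCompactIn_lexLift {K : Set Q} (hK : IsCompactIn (𝓖 e) K) (hne : K.Nonempty) :
    IsCompactIn (lexSum 𝓖) (lexLift e K) := by
  intro 𝓑 h𝓑 hcover
  by_cases hsub : ∃ X ∈ 𝓑, lexLift e univ ⊆ X
  · obtain ⟨X, hX, hsub⟩ := hsub
    exact ⟨{X}, singleton_subset_iff.2 hX, finite_singleton X, by
      simpa using (lexLift_subset_lexLift_self.2 (subset_univ K)).trans hsub⟩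
  push Not at hsub
  have hcover' : K ⊆ ⋃₀ {U ∈ 𝓖 e | lexLift e U ∈ 𝓑} := fun q hq => by
    obtain ⟨X, hX, hx⟩ := hcover (mk_mem_lexLift_self.2 hq)
    obtain ⟨U, hU, hqU, rfl⟩ :=
      (lexLift_univ_subset_or_eq_lexLift (h𝓑 hX) hx).resolve_left (hsub X hX)
    exact ⟨U, ⟨hU, hX⟩, hqU⟩
  obtain ⟨𝓒, h𝓒, hfin, hK𝓒⟩ := hK _ (sep_subset _ _) hcover'
  refine ⟨lexLift e '' 𝓒, image_subset_iff.2 fun U hU => (h𝓒 hU).2, hfin.image _, ?_⟩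
  rintro ⟨n, q⟩ (hlt | ⟨rfl, hq⟩)
  · obtain ⟨U, hU, -⟩ := hK𝓒 hne.some_mem
    exact ⟨_, mem_image_of_mem _ hU, Or.inl hlt⟩
  · obtain ⟨U, hU, hqU⟩ := hK𝓒 hq
    exact ⟨_, mem_image_of_mem _ hU, mk_mem_lexLift_self.2 hqU⟩

theorem isAlgebraicUnionSystem_lexSum (h𝓖 : ∀ e, IsAlgebraicUnionSystem (𝓖 e))
    (huniv : ∀ e, univ ∈ 𝓖 e) : IsAlgebraicUnionSystem (lexSum 𝓖) := by
  refine ⟨fun 𝓑 h𝓑 => sUnion_mem_lexSum (fun e => (h𝓖 e).sUnion_mem) h𝓑, ?_⟩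
  rintro X hX ⟨n, q⟩ hx
  obtain ⟨U, hU, hq, hUX⟩ : ∃ U ∈ 𝓖 n, q ∈ U ∧ lexLift n U ⊆ X := by
    rcases lexLift_univ_subset_or_eq_lexLift hX hx with hsub | ⟨U, hU, hq, rfl⟩
    · exact ⟨univ, huniv n, mem_univ q, hsub⟩
    · exact ⟨U, hU, hq, Subset.rfl⟩
  obtain ⟨K, hK, hcompact, hqK, hKU⟩ := (h𝓖 n).exists_isCompactIn U hU q hq
  exact ⟨lexLift n K, Or.inr ⟨n, K, hK, rfl⟩, isCompactIn_lexLift hcompact ⟨q, hqK⟩,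
    mk_mem_lexLift_self.2 hqK, (lexLift_subset_lexLift_self.2 hKU).trans hUX⟩

end LexicographicSum

section Gadget

variable {f : ℕ → ℕ} {i j j' k p : ℕ} {A A' : Set ℕ} {l : List ℕ}

/-- The positions reached from a point of `l` lying in `[j, ∞)` by steps to the right that start at
positions where `f` exceeds `j`. -/
def trail (f : ℕ → ℕ) (j : ℕ) (l : List ℕ) : Set ℕ :=
  {p | ∃ k ∈ l, j ≤ k ∧ k ≤ p ∧ ∀ u < p, k ≤ u → j < f u}

/-- An intrinsic description of the sets `trail f j l`, see `isAdmissible_iff_exists_trail`. -/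
structure IsAdmissible (f : ℕ → ℕ) (j : ℕ) (A : Set ℕ) : Prop where
  le_of_mem : ∀ p ∈ A, j ≤ p
  succ_mem : ∀ p ∈ A, j < f p → p + 1 ∈ A
  finite_or : A.Finite ∨ {u | f u ≤ j}.Finite

lemma mem_trail_of_mem (hk : k ∈ l) (hjk : j ≤ k) : k ∈ trail f j l :=
  ⟨k, hk, hjk, le_rfl, fun _ hlt hle => absurd hlt hle.not_gt⟩

lemma IsAdmissible.mem_of_quiet (hA : IsAdmissible f j A) (hk : k ∈ A) (hkp : k ≤ p)
    (hquiet : ∀ u < p, k ≤ u → j < f u) : p ∈ A := by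
  induction p, hkp using Nat.le_induction with
  | base => exact hk
  | succ p hkp ih =>
    exact hA.succ_mem p (ih fun u hu => hquiet u (by omega)) (hquiet p p.lt_succ_self hkp)

lemma IsAdmissible.trail_subset_iff (hA : IsAdmissible f j A) (hj : j ≤ j') :
    trail f j' l ⊆ A ↔ ∀ k ∈ l, j' ≤ k → k ∈ A := by
  refine ⟨fun h k hk hjk => h (mem_trail_of_mem hk hjk), ?_⟩
  rintro h p ⟨k, hk, hjk, hkp, hquiet⟩
  exact hA.mem_of_quiet (h k hk hjk) hkp fun u hu hku => hj.trans_lt (hquiet u hu hku)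

lemma isAdmissible_empty : IsAdmissible f j ∅ :=
  ⟨by simp, by simp, Or.inl finite_empty⟩

lemma exists_forall_ge_lt (h : {u | f u ≤ j}.Finite) : ∃ N, ∀ u ≥ N, j < f u := by
  obtain ⟨M, hM⟩ := h.bddAbove
  exact ⟨M + 1, fun u hu => not_le.1 fun hle => absurd (hM hle) (by omega)⟩

lemma IsAdmissible.finite_compl (hA : IsAdmissible f j A) (hinf : A.Infinite) : Aᶜ.Finite := by
  obtain ⟨N, hN⟩ := exists_forall_ge_lt (hA.finite_or.resolve_left hinf)
  obtain ⟨k, hk, hNk⟩ := hinf.exists_gt N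
  exact (finite_Iio k).subset fun p hp => not_le.1 fun hkp =>
    hp (hA.mem_of_quiet hk hkp fun u _ hku => hN u (hNk.le.trans hku))

lemma isAdmissible_trail : IsAdmissible f j (trail f j l) where
  le_of_mem := by
    rintro p ⟨k, -, hjk, hkp, -⟩
    exact hjk.trans hkp
  succ_mem := by
    rintro p ⟨k, hk, hjk, hkp, hquiet⟩ hp
    refine ⟨k, hk, hjk, by omega, fun u hu hku => ?_⟩
    rcases Nat.lt_succ_iff_lt_or_eq.1 hu with hlt | rfl
    · exact hquiet u hlt hku
    · exact hp
  finite_or := by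
    refine or_iff_not_imp_right.2 fun hinf => ?_
    choose drop hdrop hk_drop using Set.Infinite.exists_gt hinf
    refine (l.toFinset.finite_toSet.biUnion fun k _ => finite_Iic (drop k)).subset ?_
    rintro p ⟨k, hk, -, -, hquiet⟩
    refine mem_biUnion (List.mem_toFinset.2 hk) (mem_Iic.2 (not_lt.1 fun hlt => ?_))
    exact (hquiet (drop k) hlt (hk_drop k).le).not_ge (hdrop k)

lemma isAdmissible_iff_exists_trail : IsAdmissible f j A ↔ ∃ l, trail f j l = A := by
  refine ⟨fun hA => ?_, fun ⟨l, hl⟩ => hl ▸ isAdmissible_trail⟩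
  obtain ⟨B, hBA, hB⟩ : ∃ B : Finset ℕ, ↑B ⊆ A ∧ ∀ p ∈ A, p ∈ trail f j B.toList := by
    by_cases hfin : A.Finite
    · refine ⟨hfin.toFinset, by simp, fun p hp => mem_trail_of_mem (by simpa) (hA.le_of_mem p hp)⟩
    · obtain ⟨N, hN⟩ := exists_forall_ge_lt (hA.finite_or.resolve_left hfin)
      obtain ⟨k, hk, hNk⟩ := Set.Infinite.exists_gt hfin N
      have hfin' : (A ∩ Iic k).Finite := (finite_Iic k).subset inter_subset_right
      refine ⟨hfin'.toFinset, by simp, fun p hp => ?_⟩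
      rcases le_total p k with hpk | hkp
      · exact mem_trail_of_mem (by simp [hp, hpk]) (hA.le_of_mem p hp)
      · exact ⟨k, by simp [hk], hA.le_of_mem k hk, hkp, fun u _ hku => hN u (hNk.le.trans hku)⟩
  have hsub : trail f j B.toList ⊆ A :=
    (hA.trail_subset_iff le_rfl).2 fun k hk _ => hBA (by simpa using hk)
  exact ⟨B.toList, hsub.antisymm hB⟩

/-- The member of `gadget f` of level `j` with `A` as the set of omitted positions. -/
def block (j : ℕ) (A : Set ℕ) : Set (ℕ ⊕ ℕ) :=
  {x | Sum.elim (· ≤ j) (· ∉ A) x}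

/-- The algebraic union system attached to `f : ℕ → ℕ`: the blocks that omit a trail, with a bottom
and a top. -/
def gadget (f : ℕ → ℕ) : Set (Set (ℕ ⊕ ℕ)) :=
  {X | X = ∅ ∨ X = univ ∨ ∃ j A, IsAdmissible f j A ∧ block j A = X}

@[simp] lemma inl_mem_block : Sum.inl i ∈ block j A ↔ i ≤ j := Iff.rfl

lemma block_ne_univ : block j A ≠ univ := fun h =>
  (inl_mem_block.1 (h.ge (mem_univ (Sum.inl (j + 1))))).not_gt j.lt_succ_self

lemma block_nonempty : (block j A).Nonempty :=
  ⟨Sum.inl 0, Nat.zero_le j⟩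

lemma block_subset_block : block j A ⊆ block j' A' ↔ j ≤ j' ∧ A' ⊆ A := by
  refine ⟨fun h => ⟨inl_mem_block.1 (h (inl_mem_block.2 le_rfl)), fun p hp => ?_⟩, ?_⟩
  · by_contra hpA
    exact @h (Sum.inr p) hpA hp
  · rintro ⟨hj, hA⟩ (i | p) hx
    · exact le_trans hx hj
    · exact fun hp => hx (hA hp)

lemma block_trail_subset_block_trail {l' : List ℕ} :
    block j (trail f j l) ⊆ block j' (trail f j' l') ↔
      j ≤ j' ∧ ∀ k ∈ l', j' ≤ k → k ∈ trail f j l := by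
  rw [block_subset_block]
  exact and_congr_right fun hj => isAdmissible_trail.trail_subset_iff hj

lemma exists_block_of_mem_gadget {X : Set (ℕ ⊕ ℕ)} {x : ℕ ⊕ ℕ} (hX : X ∈ gadget f) (hx : x ∈ X) :
    ∃ j A, IsAdmissible f j A ∧ x ∈ block j A ∧ block j A ⊆ X := by
  rcases hX with rfl | rfl | ⟨j, A, hA, rfl⟩
  · exact absurd hx (notMem_empty x)
  · rcases x with i | p
    · exact ⟨i, ∅, isAdmissible_empty, inl_mem_block.2 le_rfl, subset_univ _⟩
    · exact ⟨0, ∅, isAdmissible_empty, notMem_empty p, subset_univ _⟩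
  · exact ⟨j, A, hA, hx, Subset.rfl⟩

lemma exists_block_eq_sUnion {𝓑 : Set (Set (ℕ ⊕ ℕ))} (h𝓑 : 𝓑 ⊆ gadget f)
    (hj : IsGreatest {i | Sum.inl i ∈ ⋃₀ 𝓑} j) : ∃ A, IsAdmissible f j A ∧ block j A = ⋃₀ 𝓑 := by
  obtain ⟨X₀, hX₀, hjX₀⟩ := hj.1
  obtain ⟨j₀, A₀, hA₀, hjj₀, hsub₀⟩ := exists_block_of_mem_gadget (h𝓑 hX₀) hjX₀
  obtain rfl : j₀ = j := (hj.2 ⟨X₀, hX₀, hsub₀ (inl_mem_block.2 le_rfl)⟩).antisymm hjj₀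
  have hA_sub : {p | Sum.inr p ∉ ⋃₀ 𝓑} ⊆ A₀ := fun p hp =>
    not_not.1 fun hpA₀ => hp ⟨X₀, hX₀, hsub₀ hpA₀⟩
  refine ⟨{p | Sum.inr p ∉ ⋃₀ 𝓑}, ⟨fun p hp => hA₀.le_of_mem p (hA_sub hp), ?_,
    hA₀.finite_or.imp_left fun hfin => hfin.subset hA_sub⟩, ?_⟩
  · rintro p hp hjp ⟨X, hX, hpX⟩
    obtain ⟨j, A, hA, hpA, hsub⟩ := exists_block_of_mem_gadget (h𝓑 hX) hpX
    have hjj₀ : j ≤ j₀ := hj.2 ⟨X, hX, hsub (inl_mem_block.2 le_rfl)⟩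
    exact hp ⟨X, hX, hsub fun hpA' => hpA (hA.succ_mem p hpA' (hjj₀.trans_lt hjp))⟩
  · ext (i | p)
    · exact ⟨fun hi => ⟨X₀, hX₀, hsub₀ hi⟩, fun hi => hj.2 hi⟩
    · exact not_not

lemma sUnion_mem_gadget {𝓑 : Set (Set (ℕ ⊕ ℕ))} (h𝓑 : 𝓑 ⊆ gadget f) : ⋃₀ 𝓑 ∈ gadget f := by
  let levels := {i | Sum.inl i ∈ ⋃₀ 𝓑}
  have hlevels : ∀ x ∈ ⋃₀ 𝓑, levels.Nonempty := by
    rintro x ⟨X, hX, hx⟩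
    obtain ⟨j, A, -, -, hsub⟩ := exists_block_of_mem_gadget (h𝓑 hX) hx
    exact ⟨j, X, hX, hsub (inl_mem_block.2 le_rfl)⟩
  rcases levels.eq_empty_or_nonempty with hempty | hne
  · exact Or.inl (eq_empty_of_forall_notMem fun x hx => (hlevels x hx).ne_empty hempty)
  by_cases hbdd : BddAbove levels
  · obtain ⟨j, hj⟩ := hbdd.exists_isGreatest_of_nonempty hne
    exact Or.inr (Or.inr ⟨j, exists_block_eq_sUnion h𝓑 hj⟩)
  · refine Or.inr (Or.inl (eq_univ_of_forall fun x => ?_))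
    obtain ⟨i, ⟨X, hX, hi⟩, hxi⟩ := not_bddAbove_iff.1 hbdd (Sum.elim id id x)
    obtain ⟨j, A, hA, hij, hsub⟩ := exists_block_of_mem_gadget (h𝓑 hX) hi
    refine ⟨X, hX, hsub ?_⟩
    rcases x with m | p
    · exact hxi.le.trans hij
    · exact fun hp => (hA.le_of_mem p hp).not_gt (hxi.trans_le hij)

lemma isCompactIn_block (hA : IsAdmissible f j A) (hinf : A.Infinite ∨ {u | f u ≤ j}.Infinite) :
    IsCompactIn (gadget f) (block j A) := by
  refine isCompactIn_of_finite_diff fun 𝓑 h𝓑 hcover => ?_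
  obtain ⟨X, hX, hjX⟩ := hcover (inl_mem_block.2 (le_refl j))
  obtain ⟨j', A', hA', hjj', hsub⟩ := exists_block_of_mem_gadget (h𝓑 hX) hjX
  have hfin : (A' \ A).Finite := by
    rcases hA'.finite_or with hfin | hfin
    · exact hfin.sdiff
    · have hfin_j : {u | f u ≤ j}.Finite :=
        hfin.subset (ofPred_subset_ofPred.2 fun u hu => hu.trans hjj')
      exact (hA.finite_compl (hinf.resolve_right (not_infinite.2 hfin_j))).subset fun p hp => hp.2
  refine ⟨X, hX, (hfin.image Sum.inr).subset ?_⟩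
  rintro (i | p) ⟨hx, hxX⟩
  · exact absurd (hsub (inl_mem_block.2 ((inl_mem_block.1 hx).trans hjj'))) hxX
  · exact mem_image_of_mem _ ⟨not_not.1 fun hp => hxX (hsub hp), hx⟩

lemma exists_isCompactIn_block (hA : IsAdmissible f j A) {x : ℕ ⊕ ℕ} (hx : x ∈ block j A) :
    ∃ K ∈ gadget f, IsCompactIn (gadget f) K ∧ x ∈ K ∧ K ⊆ block j A := by
  by_cases hinf : A.Infinite ∨ {u | f u ≤ j}.Infinite
  · exact ⟨_, Or.inr (Or.inr ⟨j, A, hA, rfl⟩), isCompactIn_block hA hinf, hx, Subset.rfl⟩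
  simp only [not_or, not_infinite] at hinf
  let k := max j (Sum.elim id id x + 1)
  have hjk : j ≤ k := le_max_left _ _
  have hxk : Sum.elim id id x < k := Nat.lt_of_succ_le (le_max_right _ _)
  have hA' : IsAdmissible f j (A ∪ Ici k) := by
    refine ⟨fun p hp => hp.elim (hA.le_of_mem p) hjk.trans, fun p hp hjp => ?_,
      Or.inr hinf.2⟩
    exact hp.imp (fun h => hA.succ_mem p h hjp) fun h => le_trans h p.le_succ
  refine ⟨block j (A ∪ Ici k), Or.inr (Or.inr ⟨j, _, hA', rfl⟩),
    isCompactIn_block hA' (Or.inl ((Ici_infinite k).mono subset_union_right)), ?_,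
    block_subset_block.2 ⟨le_rfl, subset_union_left⟩⟩
  rcases x with i | p
  · exact hx
  · exact fun hp => hp.elim hx hxk.not_ge

theorem isAlgebraicUnionSystem_gadget : IsAlgebraicUnionSystem (gadget f) := by
  refine ⟨fun 𝓑 => sUnion_mem_gadget, fun X hX x hx => ?_⟩
  obtain ⟨j, A, hA, hxA, hsub⟩ := exists_block_of_mem_gadget hX hx
  obtain ⟨K, hK, hcompact, hxK, hKA⟩ := exists_isCompactIn_block hA hxA
  exact ⟨K, hK, hcompact, hxK, hKA.trans hsub⟩

end Gadget

section PrimitiveRecursion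

variable {α β γ : Type*} [Primcodable α] [Primcodable β] [Primcodable γ]

attribute [fun_prop] Primrec PrimrecPred Primrec.pair PrimrecPred.comp PrimrecPred.and
  PrimrecPred.or PrimrecPred.not

@[fun_prop]
lemma primrec_id : Primrec fun a : α => a := Primrec.id

@[fun_prop]
lemma primrec_const (b : β) : Primrec fun _ : α => b := Primrec.const b

@[fun_prop]
lemma primrec_comp {f : β → γ} {g : α → β} (hf : Primrec f) (hg : Primrec g) :
    Primrec fun a => f (g a) := hf.comp hg

@[fun_prop]
lemma primrec_fst {f : α → β × γ} (hf : Primrec f) : Primrec fun a => (f a).1 :=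
  Primrec.fst.comp hf

@[fun_prop]
lemma primrec_snd {f : α → β × γ} (hf : Primrec f) : Primrec fun a => (f a).2 :=
  Primrec.snd.comp hf

@[fun_prop]
lemma primrec_add {f g : α → ℕ} (hf : Primrec f) (hg : Primrec g) :
    Primrec fun a => f a + g a := Primrec.nat_add.comp hf hg

@[fun_prop]
lemma primrecPred_eq {f g : α → β} (hf : Primrec f) (hg : Primrec g) :
    PrimrecPred fun a => f a = g a := by
  classical exact Primrec.eq.comp hf hg

@[fun_prop]
lemma primrecPred_lt {f g : α → ℕ} (hf : Primrec f) (hg : Primrec g) :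
    PrimrecPred fun a => f a < g a := Primrec.nat_lt.comp hf hg

@[fun_prop]
lemma primrecPred_le {f g : α → ℕ} (hf : Primrec f) (hg : Primrec g) :
    PrimrecPred fun a => f a ≤ g a := Primrec.nat_le.comp hf hg

@[fun_prop]
lemma primrecPred_imp {p q : α → Prop} (hp : PrimrecPred p) (hq : PrimrecPred q) :
    PrimrecPred fun a => p a → q a :=
  (hp.not.or hq).of_eq fun _ => imp_iff_not_or.symm

@[fun_prop]
lemma primrecPred_exists_mem_list {L : α → List β} {p : α → β → Prop} (hL : Primrec L)
    (hp : PrimrecPred fun x : α × β => p x.1 x.2) : PrimrecPred fun a => ∃ b ∈ L a, p a b :=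
  have hR : PrimrecRel fun b a => p a b := hp.comp (Primrec.snd.pair Primrec.fst)
  hR.exists_mem_list.comp hL Primrec.id

@[fun_prop]
lemma primrecPred_forall_mem_list {L : α → List β} {p : α → β → Prop} (hL : Primrec L)
    (hp : PrimrecPred fun x : α × β => p x.1 x.2) : PrimrecPred fun a => ∀ b ∈ L a, p a b :=
  have hR : PrimrecRel fun b a => p a b := hp.comp (Primrec.snd.pair Primrec.fst)
  hR.forall_mem_list.comp hL Primrec.id

@[fun_prop]
lemma primrecPred_exists_lt {b : α → ℕ} {p : α → ℕ → Prop} (hb : Primrec b)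
    (hp : PrimrecPred fun x : α × ℕ => p x.1 x.2) : PrimrecPred fun a => ∃ n < b a, p a n :=
  (primrecPred_exists_mem_list (Primrec.list_range.comp hb) hp).of_eq fun _ => by
    simp only [List.mem_range]

@[fun_prop]
lemma primrecPred_forall_lt {b : α → ℕ} {p : α → ℕ → Prop} (hb : Primrec b)
    (hp : PrimrecPred fun x : α × ℕ => p x.1 x.2) : PrimrecPred fun a => ∀ n < b a, p a n :=
  (primrecPred_forall_mem_list (Primrec.list_range.comp hb) hp).of_eq fun _ => by
    simp only [List.mem_range]

@[fun_prop]
lemma primrecPred_exists_mem_option {o : α → Option β} {p : α → β → Prop} (ho : Primrec o)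
    (hp : PrimrecPred fun x : α × β => p x.1 x.2) : PrimrecPred fun a => ∃ b ∈ o a, p a b :=
  (primrecPred_exists_mem_list (Primrec.optionToList.comp ho) hp).of_eq fun _ => by
    simp only [Option.mem_toList, Option.mem_def]

@[fun_prop]
lemma primrec_some {f : α → β} (hf : Primrec f) : Primrec fun a => some (f a) :=
  Primrec.option_some.comp hf

@[fun_prop]
lemma primrec_inl {f : α → β} (hf : Primrec f) : Primrec fun a => (Sum.inl (f a) : β ⊕ γ) :=
  Primrec.sumInl.comp hf

@[fun_prop]
lemma primrec_inr {f : α → γ} (hf : Primrec f) : Primrec fun a => (Sum.inr (f a) : β ⊕ γ) :=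
  Primrec.sumInr.comp hf

@[fun_prop]
lemma primrec_cons {f : α → β} {L : α → List β} (hf : Primrec f) (hL : Primrec L) :
    Primrec fun a => f a :: L a :=
  Primrec.list_cons.comp hf hL

@[fun_prop]
lemma primrec_filter_range {b : α → ℕ} {p : α → ℕ → Prop} [∀ a, DecidablePred (p a)]
    (hb : Primrec b) (hp : PrimrecPred fun x : α × ℕ => p x.1 x.2) :
    Primrec fun a => (List.range (b a)).filter (p a ·) :=
  have hR : PrimrecRel fun n a => p a n := hp.comp (Primrec.snd.pair Primrec.fst)
  hR.listFilter.comp (Primrec.list_range.comp hb) Primrec.id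

open Classical in
/-- The least `i < n` with `p i`, or `n` if there is none. -/
noncomputable def leastBelow (n : ℕ) (p : ℕ → Prop) : ℕ :=
  (List.range n).findIdx (p ·)

lemma leastBelow_spec {n : ℕ} {p : ℕ → Prop} (h : leastBelow n p < n) : p (leastBelow n p) := by
  classical
  have := List.findIdx_getElem (p := (p ·)) (xs := List.range n)
    (w := by simpa [leastBelow] using h)
  simpa [leastBelow] using this

lemma leastBelow_le {n i : ℕ} {p : ℕ → Prop} (hp : p i) : leastBelow n p ≤ i := by
  by_contra! hlt
  have := List.not_of_lt_findIdx hlt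
  simp [hp] at this

@[fun_prop]
lemma primrec_leastBelow {b : α → ℕ} {p : α → ℕ → Prop} (hb : Primrec b)
    (hp : PrimrecPred fun x : α × ℕ => p x.1 x.2) : Primrec fun a => leastBelow (b a) (p a) := by
  classical exact Primrec.list_findIdx (Primrec.list_range.comp hb) hp.decide

end PrimitiveRecursion

section Codes

variable {f : ℕ → ℕ → ℕ}

/-- Codes for the members of the lexicographic sum of a sequence of gadgets. -/
abbrev SumCode : Type := Option (ℕ × Option (ℕ × List ℕ))

/-- The member of the lexicographic sum of the gadgets of `f 0, f 1, …` with a given code. -/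
def codedSet (f : ℕ → ℕ → ℕ) : SumCode → Set (ℕ × (ℕ ⊕ ℕ))
  | none => univ
  | some (e, none) => lexLift e ∅
  | some (e, some (j, l)) => lexLift e (block j (trail (f e) j l))

lemma range_codedSet : range (codedSet f) = lexSum fun e => gadget (f e) := by
  apply Subset.antisymm
  · rintro _ ⟨_ | ⟨e, _ | ⟨j, l⟩⟩, rfl⟩
    · exact Or.inl rfl
    · exact Or.inr ⟨e, ∅, Or.inl rfl, rfl⟩
    · exact Or.inr ⟨e, _, Or.inr (Or.inr ⟨j, _, isAdmissible_trail, rfl⟩), rfl⟩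
  · rintro _ (rfl | ⟨e, _, rfl | rfl | ⟨j, A, hA, rfl⟩, rfl⟩)
    · exact ⟨none, rfl⟩
    · exact ⟨some (e, none), rfl⟩
    · exact ⟨some (e + 1, none), lexLift_univ.symm⟩
    · obtain ⟨l, rfl⟩ := isAdmissible_iff_exists_trail.1 hA
      exact ⟨some (e, some (j, l)), rfl⟩

lemma isAlgebraicUnionSystem_range_codedSet : IsAlgebraicUnionSystem (range (codedSet f)) :=
  range_codedSet ▸ isAlgebraicUnionSystem_lexSum (fun _ => isAlgebraicUnionSystem_gadget)
    fun _ => Or.inr (Or.inl rfl)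

lemma infinite_range_codedSet : (range (codedSet f)).Infinite := by
  refine infinite_of_injective_forall_mem (f := fun e => codedSet f (some (e, none)))
    (fun d e h => ?_) fun e => mem_range_self _
  have hd := (lexLift_subset_lexLift empty_ne_univ).1 h.le
  have he := (lexLift_subset_lexLift empty_ne_univ).1 h.ge
  omega

lemma codedSet_gadget_subset_iff {e j j' : ℕ} {l l' : List ℕ} :
    codedSet f (some (e, some (j, l))) ⊆ codedSet f (some (e, some (j', l'))) ↔
      j ≤ j' ∧ ∀ k ∈ l', j' ≤ k → k ∈ trail (f e) j l :=
  lexLift_subset_lexLift_self.trans block_trail_subset_block_trail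

lemma codedSet_subset_iff {c d : SumCode} :
    codedSet f c ⊆ codedSet f d ↔ d = none ∨ ∃ y ∈ d, ∃ x ∈ c, x.1 < y.1 ∨ x.1 = y.1 ∧
      (x.2 = none ∨ ∃ b ∈ y.2, ∃ a ∈ x.2,
        a.1 ≤ b.1 ∧ ∀ k ∈ b.2, b.1 ≤ k → k ∈ trail (f x.1) a.1 a.2) := by
  rcases d with _ | ⟨e, b⟩
  · simp [codedSet]
  rcases c with _ | ⟨d, a⟩
  · have hne : ∀ y, codedSet f (some y) ≠ univ := by
      rintro ⟨e, _ | ⟨j, l⟩⟩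
      exacts [lexLift_ne_univ e empty_ne_univ, lexLift_ne_univ e block_ne_univ]
    simp [show codedSet f none = univ from rfl, univ_subset_iff, hne]
  rcases a with _ | ⟨j, l⟩ <;> rcases b with _ | ⟨j', l'⟩
  · simp [codedSet, lexLift_subset_lexLift empty_ne_univ]
  · simp [codedSet, lexLift_subset_lexLift block_ne_univ]
  · simp [codedSet, lexLift_subset_lexLift empty_ne_univ, block_nonempty.ne_empty]
  · simp only [codedSet, lexLift_subset_lexLift block_ne_univ, Option.mem_some_iff, reduceCtorEq,
      false_or, exists_eq_left']
    refine or_congr_right (and_congr_right ?_)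
    rintro rfl
    exact block_trail_subset_block_trail

lemma primrecPred_codedSet_subset (hf : Primrec₂ f) :
    PrimrecPred fun p : SumCode × SumCode => codedSet f p.1 ⊆ codedSet f p.2 := by
  have hf' : Primrec fun x : ℕ × ℕ => f x.1 x.2 := hf
  simp only [codedSet_subset_iff, trail, mem_ofPred_eq]
  fun_prop

end Codes

section Construction

open Encodable Nat.Partrec

/-- Questions about a closure system and an embedding into it: `(Sum.inl c, q)` asks whether `q`
lies in the image of the set coded by `c`, and `(Sum.inr i, q)` whether `q` lies in the `i`-th
member. -/
abbrev Query : Type := (SumCode ⊕ ℕ) × ℕ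

/-- The `e`-th program answers `x` by `b` within `s` steps. -/
def Reports (e s : ℕ) (x : Query) (b : Bool) : Prop :=
  Code.evaln s (Denumerable.ofNat Code e) (encode x) = some (encode b)

/-- The `e`-th program decides `P`. -/
structure Decides (e : ℕ) (P : Query → Prop) : Prop where
  of_reports : ∀ {s x}, Reports e s x true → P x
  not_of_reports : ∀ {s x}, Reports e s x false → ¬ P x
  eventually : ∀ {x}, P x → ∀ᶠ s in atTop, Reports e s x true
  eventually_not : ∀ {x}, ¬ P x → ∀ᶠ s in atTop, Reports e s x false

lemma exists_decides {P : Query → Prop} (hP : ComputablePred P) : ∃ e, Decides e P := by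
  classical
  have hcomp : Computable fun n : ℕ => encode (decide (P ((decode n).getD default))) :=
    Computable.encode.comp
      (hP.decide.comp (Computable.option_getD Computable.decode (Computable.const _)))
  obtain ⟨c, hc⟩ := Code.exists_code.1 (Partrec.nat_iff.1 hcomp.partrec)
  have heval : ∀ x b, encode b ∈ c.eval (encode x) ↔ decide (P x) = b := fun x b => by
    simp only [hc, PFun.coe_val, encodek, Option.getD_some, Part.mem_some_iff, encode_inj, eq_comm]
  have hsound : ∀ {s x b}, Reports (encode c) s x b → decide (P x) = b := fun h =>
    (heval _ _).1 (Code.evaln_sound (by rwa [Reports, Denumerable.ofNat_encode] at h))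
  have hcomplete : ∀ {x b}, decide (P x) = b → ∀ᶠ s in atTop, Reports (encode c) s x b :=
    fun h => by
      obtain ⟨k, hk⟩ := Code.evaln_complete.1 ((heval _ _).2 h)
      filter_upwards [eventually_ge_atTop k] with s hs
      rw [Reports, Denumerable.ofNat_encode]
      exact Code.evaln_mono hs hk
  exact ⟨encode c, fun h => of_decide_eq_true (hsound h), fun h => of_decide_eq_false (hsound h),
    fun h => hcomplete (decide_eq_true h), fun h => hcomplete (decide_eq_false h)⟩

variable {α : Type*} [Primcodable α]

@[fun_prop]
lemma primrecPred_reports {e s : α → ℕ} {x : α → Query} (b : Bool) (he : Primrec e)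
    (hs : Primrec s) (hx : Primrec x) : PrimrecPred fun a => Reports (e a) (s a) (x a) b :=
  Primrec.eq.comp (Code.primrec_evaln.comp
    ((hs.pair ((Primrec.ofNat Code).comp he)).pair (Primrec.encode.comp hx)))
    (Primrec.const (some (encode b)))

/-- According to the record `w`, requirement `J` makes the move `v` at stage `u`: the move `0` opens
a phase of `J`, and the move `q + 1` closes one with the witness `q`. The bound `J ≤ u` excludes
stages at which nothing moves, see `nextMove`. -/
def Moves (w : ℕ → ℕ × ℕ) (J v u : ℕ) : Prop :=
  J ≤ u ∧ w u = (J, v)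

/-- At stage `s` requirement `J` is in a phase that it opened at stage `a`: no requirement `≤ J` has
moved since. -/
def InPhase (w : ℕ → ℕ × ℕ) (s J a : ℕ) : Prop :=
  Moves w J 0 a ∧ ∀ u < s, a < u → J < (w u).1

/-- The code of the set with level `j` omitting the trail of `a`. -/
def zCode (e j a : ℕ) : SumCode :=
  some (e, some (j, [a]))

open Classical in
/-- The code of the set with level `J` omitting the trails of the openings of `J` before `a`, and of
`a + 1`. -/
noncomputable def yCode (e : ℕ) (w : ℕ → ℕ × ℕ) (J a : ℕ) : SumCode :=
  some (e, some (J, (a + 1) :: (List.range a).filter (Moves w J 0 ·)))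

/-- Requirement `J` is ready to open a phase at stage `s`. -/
def WantsOpen (e : ℕ) (w : ℕ → ℕ × ℕ) (s J : ℕ) : Prop :=
  (∀ a < s, ¬ InPhase w s J a) ∧ ∃ a < s + 1, ∃ j < a + 1, (∀ u < s, a ≤ u → j < (w u).1) ∧
    ∀ u < s, ∀ q < s, Moves w J (q + 1) u → Reports e s (Sum.inl (zCode e j a), q) true

/-- Requirement `J` is ready to close its current phase with the witness `q` at stage `s`. -/
def WantsClose (e : ℕ) (w : ℕ → ℕ × ℕ) (s J q : ℕ) : Prop :=
  ∃ a < s, InPhase w s J a ∧ Reports e s (Sum.inl (yCode e w J a), q) true ∧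
    Reports e s (Sum.inl (zCode e a a), q) false ∧ Reports e s (Sum.inr J, q) true

/-- Requirement `J` is ready to make the move `v` at stage `s`. -/
def Wants (e : ℕ) (w : ℕ → ℕ × ℕ) (s J v : ℕ) : Prop :=
  v = 0 ∧ WantsOpen e w s J ∨ ∃ q < v, v = q + 1 ∧ WantsClose e w s J q

/-- The least requirement `≤ s` ready for a move `≤ s + 1`, with its least such move; the first
component is `s + 1` if there is no such requirement. -/
noncomputable def nextMove (e : ℕ) (w : ℕ → ℕ × ℕ) (s : ℕ) : ℕ × ℕ :=
  let J := leastBelow (s + 1) fun J => ∃ v < s + 2, Wants e w s J v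
  (J, leastBelow (s + 2) fun v => Wants e w s J v)

lemma wants_congr {e s J v : ℕ} {w w' : ℕ → ℕ × ℕ} (h : ∀ u < s, w u = w' u) :
    Wants e w s J v ↔ Wants e w' s J v := by
  have hmoves : ∀ u < s, ∀ v, Moves w J v u ↔ Moves w' J v u := fun u hu v => by
    rw [Moves, Moves, h u hu]
  have hphase : ∀ a < s, (InPhase w s J a ↔ InPhase w' s J a) := fun a ha => by
    simp +contextual only [InPhase, hmoves a ha, h]
  have hcode : ∀ a < s, yCode e w J a = yCode e w' J a := fun a ha => by
    unfold yCode
    congr 4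
    exact congrArg _ (List.filter_congr fun u hu =>
      decide_eq_decide.2 (hmoves u ((List.mem_range.1 hu).trans ha) 0))
  have hclose : ∀ q, WantsClose e w s J q ↔ WantsClose e w' s J q := fun q =>
    exists_congr fun a => and_congr_right fun ha => by rw [hphase a ha, hcode a ha]
  simp +contextual only [Wants, WantsOpen, hphase, hclose, hmoves, h]

lemma nextMove_congr {e s : ℕ} {w w' : ℕ → ℕ × ℕ} (h : ∀ u < s, w u = w' u) :
    nextMove e w s = nextMove e w' s := by
  simp only [nextMove, wants_congr h]

/-- The record of the construction, in which each stage makes the next move. -/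
noncomputable def record (e s : ℕ) : ℕ × ℕ :=
  nextMove e (fun u => if u < s then record e u else (0, 0)) s

lemma record_eq (e s : ℕ) : record e s = nextMove e (record e) s := by
  rw [record]
  exact nextMove_congr fun u hu => if_pos hu

lemma primrec_nextMove {e s : α → ℕ} {w : α → ℕ → ℕ × ℕ} (he : Primrec e) (hs : Primrec s)
    (hw : Primrec fun x : α × ℕ => w x.1 x.2) :
    Primrec fun a => nextMove (e a) (w a) (s a) := by
  simp only [nextMove, Wants, WantsOpen, WantsClose, InPhase, yCode, zCode, Moves]
  fun_prop

lemma primrec_record : Primrec₂ record := by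
  refine Primrec.nat_strong_rec record
    (g := fun e L => some (nextMove e (L.getD · (0, 0)) L.length)) ?_ fun e s => ?_
  · exact Primrec.option_some.comp (primrec_nextMove Primrec.fst
      (Primrec.list_length.comp Primrec.snd)
      ((Primrec.list_getD (0, 0)).comp (Primrec.snd.comp Primrec.fst) Primrec.snd))
  · rw [record_eq, List.length_map, List.length_range]
    exact congrArg some (nextMove_congr fun u hu => by simp [hu])

lemma Moves.wants {e J v s : ℕ} (h : Moves (record e) J v s) :
    v ≤ s + 1 ∧ Wants e (record e) s J v := by
  obtain ⟨hJs, hrecord⟩ := h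
  rw [record_eq, nextMove, Prod.mk.injEq] at hrecord
  obtain ⟨rfl, rfl⟩ := hrecord
  have hready : ∃ v < s + 2, Wants e (record e) s _ v := leastBelow_spec (Nat.lt_succ_of_le hJs)
  obtain ⟨v, hv, hwants⟩ := hready
  have hlt : leastBelow (s + 2) (Wants e (record e) s _) < s + 2 :=
    (leastBelow_le hwants).trans_lt hv
  exact ⟨Nat.le_of_lt_succ hlt, leastBelow_spec hlt⟩

/-- The requirement that moves at stage `s` of the construction. -/
noncomputable def mover (e s : ℕ) : ℕ :=
  (record e s).1

lemma primrec_mover : Primrec₂ mover :=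
  Primrec.fst.comp primrec_record

lemma mover_le {e J v s : ℕ} (hv : v ≤ s + 1) (h : Wants e (record e) s J v) : mover e s ≤ J := by
  rw [mover, record_eq]
  exact leastBelow_le ⟨v, Nat.lt_succ_of_le hv, h⟩

lemma Moves.mover_eq {e J v s : ℕ} (h : Moves (record e) J v s) : mover e s = J :=
  congrArg Prod.fst h.2

lemma Moves.wantsOpen {e J s : ℕ} (h : Moves (record e) J 0 s) : WantsOpen e (record e) s J :=
  h.wants.2.elim And.right fun ⟨_, hq, _⟩ => absurd hq (Nat.not_lt_zero _)

lemma Moves.wantsClose {e J q s : ℕ} (h : Moves (record e) J (q + 1) s) :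
    WantsClose e (record e) s J q := by
  rcases h.wants.2 with ⟨h0, -⟩ | ⟨q', -, hq', hclose⟩
  · exact absurd h0 q.succ_ne_zero
  · exact Nat.succ_injective hq' ▸ hclose

end Construction

section Diagonalization

variable {e J J' j j' a a' b q s u u' : ℕ}

lemma zCode_subset_zCode (hja : j ≤ a) (hj : j ≤ j') (ha : a ≤ a')
    (hquiet : ∀ u < a', a ≤ u → j < mover e u) :
    codedSet mover (zCode e j a) ⊆ codedSet mover (zCode e j' a') :=
  codedSet_gadget_subset_iff.2 ⟨hj, fun _ hk _ =>
    ⟨a, List.mem_singleton_self a, hja, (List.mem_singleton.1 hk) ▸ ⟨ha, hquiet⟩⟩⟩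

lemma yCode_subset_zCode_of_moves (h : Moves (record e) J 0 a) (hab : a < b) :
    codedSet mover (yCode e (record e) J b) ⊆ codedSet mover (zCode e a a) := by
  refine codedSet_gadget_subset_iff.2 ⟨h.1, fun k hk _ => ?_⟩
  rw [List.mem_singleton.1 hk]
  exact mem_trail_of_mem (by simp [h, hab]) h.1

lemma yCode_subset_zCode_succ :
    codedSet mover (yCode e (record e) J a) ⊆ codedSet mover (zCode e J (a + 1)) := by
  refine codedSet_gadget_subset_iff.2 ⟨le_rfl, fun k hk hJk => ?_⟩
  rw [List.mem_singleton.1 hk] at hJk ⊢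
  exact mem_trail_of_mem List.mem_cons_self hJk

lemma not_yCode_subset_zCode_self :
    ¬ codedSet mover (yCode e (record e) J a) ⊆ codedSet mover (zCode e a a) := by
  intro hsub
  obtain ⟨k, hk, -, hka, hquiet⟩ :=
    (codedSet_gadget_subset_iff.1 hsub).2 a (List.mem_singleton_self a) le_rfl
  rcases List.mem_cons.1 hk with rfl | hk
  · omega
  · have hmoves : Moves (record e) J 0 k ∧ k < a := by simpa [and_comm] using hk
    exact (hquiet k hmoves.2 le_rfl).ne' hmoves.1.mover_eq

/-- `ψ` indexes an order embedding of the coded sets into the family `F`, and the `e`-th program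
decides membership in the members of `F` and in the images of the coded sets. -/
structure IsRepresentation (F : ℕ → Set ℕ) (ψ : SumCode → ℕ) (e : ℕ) : Prop where
  decides : Decides e fun x => x.2 ∈ F (x.1.elim ψ id)
  subset_iff : ∀ {c d}, F (ψ c) ⊆ F (ψ d) ↔ codedSet mover c ⊆ codedSet mover d

variable {F : ℕ → Set ℕ} {ψ : SumCode → ℕ}

/-- From stage `a` on, no requirement `≤ j` moves. -/
def IsSettled (e j a : ℕ) : Prop :=
  j ≤ a ∧ ∀ u ≥ a, j < mover e u

/-- The images under `ψ` of the sets of level `j` that omit the trail of `a`, for `j` settled from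
stage `a` on. -/
def settledSets (F : ℕ → Set ℕ) (ψ : SumCode → ℕ) (e : ℕ) : Set (Set ℕ) :=
  {X | ∃ j a, IsSettled e j a ∧ F (ψ (zCode e j a)) = X}

lemma exists_isSettled (h : Tendsto (mover e) atTop atTop) (j : ℕ) : ∃ a, IsSettled e j a := by
  obtain ⟨a, ha⟩ := eventually_atTop.1 (h.eventually_gt_atTop j)
  exact ⟨max j a, le_max_left _ _, fun u hu => ha u ((le_max_right _ _).trans hu)⟩

lemma settledSets_nonempty (h : Tendsto (mover e) atTop atTop) :
    (settledSets F ψ e).Nonempty :=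
  let ⟨a, ha⟩ := exists_isSettled h 0
  ⟨_, 0, a, ha, rfl⟩

lemma IsSettled.codedSet_zCode_subset (h : IsSettled e j a) (hj : j ≤ j') (ha : a ≤ a') :
    codedSet mover (zCode e j a) ⊆ codedSet mover (zCode e j' a') :=
  zCode_subset_zCode h.1 hj ha fun u _ => h.2 u

lemma IsRepresentation.directedOn_settledSets (h : IsRepresentation F ψ e) :
    DirectedOn (· ⊆ ·) (settledSets F ψ e) := by
  rintro _ ⟨j, a, ha, rfl⟩ _ ⟨j', a', ha', rfl⟩
  have hmax : IsSettled e (max j j') (max a a') := ⟨max_le_max ha.1 ha'.1, fun u hu =>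
    max_lt (ha.2 u ((le_max_left _ _).trans hu)) (ha'.2 u ((le_max_right _ _).trans hu))⟩
  exact ⟨_, ⟨_, _, hmax, rfl⟩,
    h.subset_iff.2 (ha.codedSet_zCode_subset (le_max_left _ _) (le_max_left _ _)),
    h.subset_iff.2 (ha'.codedSet_zCode_subset (le_max_right _ _) (le_max_right _ _))⟩

lemma IsRepresentation.eventually_wantsClose (h : IsRepresentation F ψ e)
    (hJ : F J = ⋃₀ settledSets F ψ e) (ha : Moves (record e) J 0 a)
    (hopen : ∀ u > a, J < mover e u) : ∃ q, ∀ᶠ s in atTop, WantsClose e (record e) s J q := by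
  obtain ⟨q, hqY, hqZ⟩ := not_subset.1 fun hsub =>
    not_yCode_subset_zCode_self (h.subset_iff.1 hsub)
  have hqJ : q ∈ F J := hJ ▸ ⟨_, ⟨J, a + 1, ⟨ha.1.trans a.le_succ, hopen⟩, rfl⟩,
    h.subset_iff.2 yCode_subset_zCode_succ hqY⟩
  refine ⟨q, ?_⟩
  filter_upwards [eventually_gt_atTop a,
    h.decides.eventually (x := (Sum.inl (yCode e (record e) J a), q)) hqY,
    h.decides.eventually_not (x := (Sum.inl (zCode e a a), q)) hqZ,
    h.decides.eventually (x := (Sum.inr J, q)) hqJ] with s has hY hZ hJq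
  exact ⟨a, has, ⟨ha, fun u _ hau => hopen u hau⟩, hY, hZ, hJq⟩

lemma IsRepresentation.exists_gt_mover_le (h : IsRepresentation F ψ e)
    (hJ : F J = ⋃₀ settledSets F ψ e) (ha : Moves (record e) J 0 a) :
    ∃ u > a, mover e u ≤ J := by
  by_contra! hopen
  obtain ⟨q, hq⟩ := h.eventually_wantsClose hJ ha hopen
  obtain ⟨s, hclose, hqs, has⟩ :=
    (hq.and ((eventually_ge_atTop q).and (eventually_gt_atTop a))).exists
  have hwants : Wants e (record e) s J (q + 1) := Or.inr ⟨q, q.lt_succ_self, rfl, hclose⟩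
  exact (hopen s has).not_ge (mover_le (Nat.succ_le_succ hqs) hwants)

lemma IsRepresentation.mem_of_moves (h : IsRepresentation F ψ e)
    (hu : Moves (record e) J (q + 1) u) : q ∈ F J := by
  obtain ⟨_, _, _, _, _, hq⟩ := hu.wantsClose
  exact h.decides.of_reports hq

lemma finite_witnesses (h : IsSettled e J a) : {q | ∃ u, Moves (record e) J (q + 1) u}.Finite := by
  refine ((finite_Iio a).image fun u => (record e u).2 - 1).subset ?_
  rintro q ⟨u, hu⟩
  refine ⟨u, not_le.1 fun hau => (h.2 u hau).ne' hu.mover_eq, ?_⟩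
  simp only [hu.2, Nat.add_sub_cancel]

lemma IsRepresentation.exists_settled_witnesses (h : IsRepresentation F ψ e)
    (htendsto : Tendsto (mover e) atTop atTop) (hJ : F J = ⋃₀ settledSets F ψ e) :
    ∃ j a, IsSettled e j a ∧ ∀ q u, Moves (record e) J (q + 1) u → q ∈ F (ψ (zCode e j a)) := by
  obtain ⟨b, hb⟩ := exists_isSettled htendsto J
  obtain ⟨_, ⟨j, a, ha, rfl⟩, hsub⟩ :=
    h.directedOn_settledSets.exists_mem_subset_of_finite_of_subset_sUnion
      (settledSets_nonempty htendsto) (finite_witnesses hb)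
      fun q ⟨u, hu⟩ => hJ ▸ h.mem_of_moves hu
  exact ⟨j, a, ha, fun q u hu => hsub ⟨u, hu⟩⟩

lemma IsRepresentation.eventually_wantsOpen (h : IsRepresentation F ψ e)
    (htendsto : Tendsto (mover e) atTop atTop) (hJ : F J = ⋃₀ settledSets F ψ e) :
    ∀ᶠ s in atTop, WantsOpen e (record e) s J := by
  obtain ⟨b, hb⟩ := exists_isSettled htendsto J
  obtain ⟨j, a, ha, hwitness⟩ := h.exists_settled_witnesses htendsto hJ
  have hreports : ∀ᶠ s in atTop, ∀ q ∈ {q | ∃ u, Moves (record e) J (q + 1) u},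
      Reports e s (Sum.inl (zCode e j a), q) true :=
    (eventually_all_finite (finite_witnesses hb)).2 fun q ⟨u, hu⟩ =>
      h.decides.eventually (x := (Sum.inl (zCode e j a), q)) (hwitness q u hu)
  filter_upwards [hreports, eventually_ge_atTop a, eventually_ge_atTop b] with s hs has hbs
  refine ⟨fun c _ hphase => ?_, a, Nat.lt_succ_of_le has, j, Nat.lt_succ_of_le ha.1,
    fun u _ => ha.2 u, fun u _ q _ hu => hs q ⟨u, hu⟩⟩
  obtain ⟨u, hcu, hu⟩ := h.exists_gt_mover_le hJ hphase.1
  rcases lt_or_ge u s with hus | hsu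
  · exact (hphase.2 u hus hcu).not_ge hu
  · exact (hb.2 u (hbs.trans hsu)).not_ge hu

theorem IsRepresentation.not_tendsto_mover (h : IsRepresentation F ψ e)
    (hF : ∀ 𝒯 ⊆ range F, 𝒯.Nonempty → DirectedOn (· ⊆ ·) 𝒯 → ⋃₀ 𝒯 ∈ range F) :
    ¬ Tendsto (mover e) atTop atTop := by
  intro htendsto
  have hrange : settledSets F ψ e ⊆ range F := by
    rintro _ ⟨j, a, -, rfl⟩
    exact mem_range_self _
  obtain ⟨J, hJ⟩ :=
    hF _ hrange (settledSets_nonempty htendsto) h.directedOn_settledSets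
  obtain ⟨s, hwants, hlt⟩ :=
    ((h.eventually_wantsOpen htendsto hJ).and (htendsto.eventually_gt_atTop J)).exists
  exact hlt.not_ge (mover_le (Nat.zero_le _) (Or.inl ⟨rfl, hwants⟩))

lemma exists_frequently_eq_of_not_tendsto {f : ℕ → ℕ} (h : ¬ Tendsto f atTop atTop) :
    ∃ J, (∀ᶠ u in atTop, J ≤ f u) ∧ ∃ᶠ u in atTop, f u = J := by
  classical
  have hex : ∃ b, ¬ ∀ᶠ u in atTop, b ≤ f u := by simpa [tendsto_atTop] using h
  obtain ⟨J, hJ⟩ : ∃ J, Nat.find hex = J + 1 := Nat.exists_eq_succ_of_ne_zero fun h0 =>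
    Nat.find_spec hex (Eventually.of_forall fun u => h0 ▸ Nat.zero_le _)
  have hle : ∀ᶠ u in atTop, J ≤ f u := not_not.1 (Nat.find_min hex (hJ ▸ J.lt_succ_self))
  refine ⟨J, hle, ?_⟩
  have hfreq : ∃ᶠ u in atTop, ¬ J + 1 ≤ f u := not_eventually.1 (hJ ▸ Nat.find_spec hex)
  exact (hfreq.and_eventually hle).mono fun u hu => by omega

lemma not_forall_mem_iff_ne {ι P : Type*} [Infinite ι] {F : ℕ → Set P}
    (hF : ∀ 𝒯 ⊆ range F, ⋂₀ 𝒯 ∈ range F) {Z : ι → Set P} (hZ : ∀ i, Z i ∈ range F) (q : ι → P) :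
    ¬ ∀ i j, q i ∈ Z j ↔ i ≠ j := by
  intro hq
  choose index hindex using fun A : Set ι =>
    hF (Z '' A) (image_subset_iff.2 fun i _ => hZ i)
  have hmem : ∀ A i, q i ∈ F (index A) ↔ i ∉ A := fun A i => by
    simp only [hindex, sInter_image, mem_iInter, hq]
    exact ⟨fun h hi => h i hi rfl, fun h j hj hij => h (hij ▸ hj)⟩
  have hinj : Injective index := fun A B h => by
    ext i
    rw [← not_iff_not, ← hmem, ← hmem, h]
  exact cantor_injective (fun A => Infinite.natEmbedding ι (index A))
    ((Infinite.natEmbedding ι).injective.comp hinj)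

lemma frequently_closes (hle : ∀ᶠ u in atTop, J ≤ mover e u)
    (hfreq : ∃ᶠ u in atTop, mover e u = J) :
    ∃ᶠ u in atTop, ∃ q, Moves (record e) J (q + 1) u := by
  classical
  obtain ⟨N, hN⟩ := eventually_atTop.1 hle
  rw [frequently_atTop] at hfreq ⊢
  intro M
  obtain ⟨a, ha, haJ⟩ := hfreq (max M (max N J))
  simp only [max_le_iff] at ha
  have hmoves : ∀ {u}, a ≤ u → mover e u = J → Moves (record e) J (record e u).2 u :=
    fun hau hu => ⟨ha.2.2.trans hau, Prod.ext hu rfl⟩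
  rcases hv : (record e a).2 with _ | q
  · have hex : ∃ u, a < u ∧ mover e u = J := by simpa [Nat.succ_le_iff] using hfreq (a + 1)
    obtain ⟨hau, hu⟩ := Nat.find_spec hex
    have hphase : InPhase (record e) (Nat.find hex) J a := ⟨hv ▸ hmoves le_rfl haJ, fun u hu hau =>
      (hN u (ha.2.1.trans hau.le)).lt_of_ne' fun huJ => Nat.find_min hex hu ⟨hau, huJ⟩⟩
    refine ⟨Nat.find hex, ha.1.trans hau.le, (record e (Nat.find hex)).2 - 1, ?_⟩
    rcases hv' : (record e (Nat.find hex)).2 with _ | q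
    · exact absurd hphase ((hv' ▸ hmoves hau.le hu).wantsOpen.1 a hau)
    · exact hv' ▸ hmoves hau.le hu
  · exact ⟨a, ha.1, q, hv ▸ hmoves le_rfl haJ⟩

lemma InPhase.lt_of_moves {v : ℕ} (ha : InPhase (record e) s J a)
    (hu : Moves (record e) J (v + 1) u) (hus : u < s) : u < a := by
  rcases lt_trichotomy u a with hlt | rfl | hgt
  · exact hlt
  · exact absurd (Prod.ext_iff.1 (hu.2.symm.trans ha.1.2)).2 v.succ_ne_zero
  · exact absurd hu.mover_eq (ha.2 u hus hgt).ne'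

lemma IsRepresentation.exists_inPhase (h : IsRepresentation F ψ e)
    (hu : Moves (record e) J (q + 1) u) : ∃ a < u, InPhase (record e) u J a ∧
      q ∈ F (ψ (yCode e (record e) J a)) ∧ q ∉ F (ψ (zCode e a a)) := by
  obtain ⟨a, hau, hphase, hY, hZ, -⟩ := hu.wantsClose
  exact ⟨a, hau, hphase, h.decides.of_reports hY, h.decides.not_of_reports hZ⟩

lemma IsRepresentation.mem_zCode_of_lt (h : IsRepresentation F ψ e)
    (hu : Moves (record e) J (q + 1) u) (ha : Moves (record e) J 0 a) (hua : u < a) :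
    q ∈ F (ψ (zCode e a a)) := by
  obtain ⟨-, b, hb, j, hj, hquiet, hreports⟩ := ha.wantsOpen
  have hqa : q < a := (Nat.le_of_succ_le_succ hu.wants.1).trans_lt hua
  have hsub := zCode_subset_zCode (e := e) (Nat.le_of_lt_succ hj)
    ((Nat.le_of_lt_succ hj).trans (Nat.le_of_lt_succ hb)) (Nat.le_of_lt_succ hb) hquiet
  exact h.subset_iff.2 hsub (h.decides.of_reports (hreports u hua q hqa hu))

theorem IsRepresentation.tendsto_mover (h : IsRepresentation F ψ e)
    (hF : ∀ 𝒯 ⊆ range F, ⋂₀ 𝒯 ∈ range F) : Tendsto (mover e) atTop atTop := by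
  by_contra hnot
  obtain ⟨J, hle, hfreq⟩ := exists_frequently_eq_of_not_tendsto hnot
  have hinf := Nat.frequently_atTop_iff_infinite.1 (frequently_closes hle hfreq)
  have : Infinite {u | ∃ q, Moves (record e) J (q + 1) u} := hinf.to_subtype
  choose q hq using fun u : {u | ∃ q, Moves (record e) J (q + 1) u} => u.2
  choose a hau hphase hqY hqZ using fun u => h.exists_inPhase (hq u)
  refine not_forall_mem_iff_ne hF (Z := fun u => F (ψ (zCode e (a u) (a u))))
    (fun u => mem_range_self _) q fun u u' => ⟨?_, fun hne => ?_⟩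
  · rintro hmem rfl
    exact hqZ u hmem
  · rcases lt_or_gt_of_ne (Subtype.coe_injective.ne hne) with hlt | hgt
    · exact h.mem_zCode_of_lt (hq u) (hphase u').1
        ((hphase u').lt_of_moves (hq u) hlt)
    · have hlt := (hau u').trans ((hphase u).lt_of_moves (hq u') hgt)
      exact h.subset_iff.2 (yCode_subset_zCode_of_moves (hphase u').1 hlt) (hqY u)

end Diagonalization

section ClosureSystems

/-- A uniformly computable family of sets of natural numbers closed under arbitrary intersections
and nonempty directed unions. -/
structure IsComputableClosureSystem (F : ℕ → Set ℕ) : Prop where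
  computablePred_mem : ComputablePred fun p : ℕ × ℕ => p.2 ∈ F p.1
  sInter_mem : ∀ 𝒯 ⊆ range F, ⋂₀ 𝒯 ∈ range F
  sUnion_mem : ∀ 𝒯 ⊆ range F, 𝒯.Nonempty → DirectedOn (· ⊆ ·) 𝒯 → ⋃₀ 𝒯 ∈ range F

theorem exists_computable_algebraic_lattice_not_computably_iso_general :
    ∃ r : ℕ → ℕ → Bool, IsComputableAlgebraicLattice r ∧
      ∀ F : ℕ → Set ℕ, IsComputableClosureSystem F →
        ¬ ∃ φ : ℕ → ℕ, Computable φ ∧ ∀ i j : ℕ, RelOfBool r i j ↔ F (φ i) ⊆ F (φ j) := by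
  obtain ⟨r, π, hr, hπ, hrπ⟩ := exists_isComputableAlgebraicLattice
    (primrecPred_codedSet_subset primrec_mover).computablePred infinite_range_codedSet
    isAlgebraicUnionSystem_range_codedSet
  classical
  refine ⟨r, hr, fun F hF ⟨φ, hφ, hrφ⟩ => ?_⟩
  have hindex : Computable fun x : Query => x.1.elim (φ ∘ π) id :=
    Computable.sumCasesOn Computable.fst ((hφ.comp hπ).comp Computable.snd) Computable.snd
  obtain ⟨e, he⟩ := exists_decides (P := fun x => x.2 ∈ F (x.1.elim (φ ∘ π) id))
    (hF.computablePred_mem.decide.comp (hindex.pair Computable.snd)).computablePred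
  have hrep : IsRepresentation F (φ ∘ π) e :=
    ⟨he, fun {c d} => (hrφ (π c) (π d)).symm.trans (hrπ c d)⟩
  exact hrep.not_tendsto_mover hF.sUnion_mem (hrep.tendsto_mover hF.sInter_mem)

/-- The graph of the relation coded by `E i`, with pairs coded by numbers. -/
def codedGraph (E : ℕ → ℕ → ℕ → Bool) (i : ℕ) : Set ℕ :=
  {q | RelOfBool (E i) q.unpair.1 q.unpair.2}

/-- The graph of an equivalence relation, with pairs coded by numbers. -/
def setoidGraph (s : Setoid ℕ) : Set ℕ :=
  {q | s q.unpair.1 q.unpair.2}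

lemma codedGraph_subset_codedGraph {E : ℕ → ℕ → ℕ → Bool} {i j : ℕ} :
    codedGraph E i ⊆ codedGraph E j ↔ ∀ a b, RelOfBool (E i) a b → RelOfBool (E j) a b :=
  ⟨fun h a b hab => by
    simpa [codedGraph] using @h (Nat.pair a b) (by simpa [codedGraph] using hab), fun h _ => h _ _⟩

lemma setoidGraph_subset_setoidGraph {s t : Setoid ℕ} :
    setoidGraph s ⊆ setoidGraph t ↔ s ≤ t :=
  ⟨fun h a b hab => by
    simpa [setoidGraph] using @h (Nat.pair a b) (by simpa [setoidGraph] using hab),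
    fun h _ => @h _ _⟩

lemma range_codedGraph {E : ℕ → ℕ → ℕ → Bool} (hE : ∀ i, Equivalence (RelOfBool (E i))) :
    range (codedGraph E) = setoidGraph '' SetoidsOf E := by
  apply Subset.antisymm
  · rintro _ ⟨i, rfl⟩
    exact ⟨⟨RelOfBool (E i), hE i⟩, ⟨i, fun _ _ => Iff.rfl⟩, rfl⟩
  · rintro _ ⟨s, ⟨i, hs⟩, rfl⟩
    exact ⟨i, ext fun q => (hs _ _).symm⟩

lemma setoidGraph_sInf (S : Set (Setoid ℕ)) :
    setoidGraph (sInf S) = ⋂₀ (setoidGraph '' S) := by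
  ext q
  simp only [sInter_image, mem_iInter₂]
  exact Setoid.sInf_iff

lemma setoid_sSup_iff_of_directedOn {α : Type*} {S : Set (Setoid α)} (hne : S.Nonempty)
    (hdir : DirectedOn (· ≤ ·) S) {a b : α} : sSup S a b ↔ ∃ s ∈ S, s a b := by
  refine ⟨fun h => ?_, fun ⟨s, hs, hab⟩ => le_sSup hs hab⟩
  let union : Setoid α :=
    { r a b := ∃ s ∈ S, s a b
      iseqv :=
        { refl a := hne.imp fun s hs => ⟨hs, s.refl a⟩
          symm := fun ⟨s, hs, hab⟩ => ⟨s, hs, s.symm hab⟩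
          trans := fun ⟨s, hs, hab⟩ ⟨t, ht, hbc⟩ =>
            let ⟨u, hu, hsu, htu⟩ := hdir s hs t ht
            ⟨u, hu, u.trans (hsu hab) (htu hbc)⟩ } }
  have hle : sSup S ≤ union := sSup_le fun s hs _ _ hab => ⟨s, hs, hab⟩
  exact hle h

lemma setoidGraph_sSup {S : Set (Setoid ℕ)} (hne : S.Nonempty) (hdir : DirectedOn (· ≤ ·) S) :
    setoidGraph (sSup S) = ⋃₀ (setoidGraph '' S) := by
  ext q
  simp only [sUnion_image, mem_iUnion₂, exists_prop]
  exact setoid_sSup_iff_of_directedOn hne hdir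

lemma isComputableClosureSystem_codedGraph {E : ℕ → ℕ → ℕ → Bool}
    (hE : IsComputableCompleteSublatticeOfEq E) : IsComputableClosureSystem (codedGraph E) := by
  obtain ⟨hcomp, hequiv, -, hcomplete⟩ := hE
  have hunpair : Computable fun p : ℕ × ℕ => p.2.unpair :=
    Primrec.unpair.to_comp.comp Computable.snd
  refine ⟨⟨fun _ => instDecidableEqBool _ _,
    (hcomp.comp (Computable.fst.pair hunpair)).of_eq fun _ => Bool.decide_eq_true.symm⟩, ?_, ?_⟩
  · rw [range_codedGraph hequiv]
    intro 𝒯 h𝒯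
    obtain ⟨S, hS, rfl⟩ := subset_image_iff.1 h𝒯
    exact ⟨sInf S, (hcomplete S hS).2, setoidGraph_sInf S⟩
  · rw [range_codedGraph hequiv]
    intro 𝒯 h𝒯 hne hdir
    obtain ⟨S, hS, rfl⟩ := subset_image_iff.1 h𝒯
    have hdir' : DirectedOn (· ≤ ·) S := (directedOn_image.1 hdir).mono
      fun _ _ => setoidGraph_subset_setoidGraph.1
    exact ⟨sSup S, (hcomplete S hS).1, setoidGraph_sSup hne.of_image hdir'⟩

end ClosureSystems

/-- There is a computable algebraic lattice that is not computably isomorphic to any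
computable complete sublattice of `Eq(ℕ)`. -/
theorem exists_computable_algebraic_lattice_not_computably_iso :
    ∃ r : ℕ → ℕ → Bool, IsComputableAlgebraicLattice r ∧
      ∀ E : ℕ → ℕ → ℕ → Bool, IsComputableCompleteSublatticeOfEq E →
        ¬ ∃ φ : ℕ → ℕ, Computable φ ∧
          ∀ i j : ℕ, RelOfBool r i j ↔
            ∀ a b : ℕ, RelOfBool (E (φ i)) a b → RelOfBool (E (φ j)) a b := by
  obtain ⟨r, hr, hnot⟩ := exists_computable_algebraic_lattice_not_computably_iso_general
  refine ⟨r, hr, fun E hE ⟨φ, hφ, hiso⟩ => ?_⟩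
  exact hnot (codedGraph E) (isComputableClosureSystem_codedGraph hE)
    ⟨φ, hφ, fun i j => (hiso i j).trans codedGraph_subset_codedGraph.symm⟩
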